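/- Let c : Ω → [0,∞] be 𝒜-measurable. Then duality holds over finitely additive couplings: inf_{Q ∈ M} Q(c) = sup { Σ_{i=1}^n μ_i(f_i) : f_i ∈ L_1(μ_i) for all i and Σ_{i=1}^n f_i(ω_i) ≤ c(ω) for all ω ∈ Ω }. -/

import Mathlib

open MeasureTheory Set ENNReal

namespace FATransport

variable {α : Type*} [MeasurableSpace α]

/-- The collection of measurable sets of `α` (the σ-field `𝒜`), as a type. -/
abbrev MSet (α : Type*) [MeasurableSpace α] := {A : Set α // MeasurableSet A}

/-- A finitely additive probability on the σ-field of `α`, viewed as an element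
of `[0,1]^𝒜`: it maps the whole space to `1` and is additive on disjoint pairs. -/
def IsFAP (P : MSet α → unitInterval) : Prop :=
  (P ⟨Set.univ, MeasurableSet.univ⟩ : ℝ) = 1 ∧
    ∀ A B : MSet α, Disjoint A.1 B.1 →
      (P ⟨A.1 ∪ B.1, A.2.union B.2⟩ : ℝ) = (P A : ℝ) + (P B : ℝ)

/-- `ℙ`, the set of all finitely additive probabilities on `𝒜`, as a subset of
`[0,1]^𝒜` (with its product topology). -/
def FAPs (α : Type*) [MeasurableSpace α] : Set (MSet α → unitInterval) :=
  {P | IsFAP P}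

/-- Integral of a simple function with respect to a finitely additive set function. -/
noncomputable def simpleInt (P : MSet α → unitInterval) (s : SimpleFunc α ℝ) : ℝ :=
  ∑ y ∈ s.range, y * (P ⟨(⇑s) ⁻¹' {y}, s.measurableSet_fiber y⟩ : ℝ)

/-- `P(f)` for a bounded measurable `f : α → ℝ`: the supremum of the integrals of
simple functions below `f` (for a f.a.p. `P` and bounded measurable `f` this agrees
with the integral defined by uniform approximation by simple functions). -/
noncomputable def fapInt (P : MSet α → unitInterval) (f : α → ℝ) : ℝ :=
  sSup (simpleInt P '' {s : SimpleFunc α ℝ | ∀ x, s x ≤ f x})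

/-- `P(c) = sup_k P(c ∧ k)` for a `[0,∞]`-valued `c`. -/
noncomputable def fapIntTop (P : MSet α → unitInterval) (c : α → ℝ≥0∞) : ℝ≥0∞ :=
  ⨆ k : ℕ, ENNReal.ofReal (fapInt P (fun x => (c x ⊓ (k : ℝ≥0∞)).toReal))

/-- A real-valued `f` is `P`-integrable iff `P(|f|) < ∞`. -/
def FapIntegrable (P : MSet α → unitInterval) (f : α → ℝ) : Prop :=
  fapIntTop P (fun x => ENNReal.ofReal |f x|) < ⊤

/-- `P(f) = P(f⁺) - P(f⁻)` for a (`P`-integrable) real-valued `f`. -/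
noncomputable def fapIntR (P : MSet α → unitInterval) (f : α → ℝ) : ℝ :=
  (fapIntTop P (fun x => ENNReal.ofReal (f x))).toReal -
    (fapIntTop P (fun x => ENNReal.ofReal (-f x))).toReal

/-- `P ≪ Q` for finitely additive probabilities. -/
def FapAC (P Q : MSet α → unitInterval) : Prop :=
  ∀ A : MSet α, (Q A : ℝ) = 0 → (P A : ℝ) = 0

variable {n : ℕ} {Ω : Fin n → Type*} [∀ i, MeasurableSpace (Ω i)]

/-- `M`, the set of finitely additive probabilities on `𝒜 = ⊗ᵢ 𝒜ᵢ` whose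
`i`-th marginal is `μ i` for every `i`. -/
def couplings (μ : ∀ i, Measure (Ω i)) : Set (MSet (∀ i, Ω i) → unitInterval) :=
  {P | IsFAP P ∧ ∀ (i : Fin n) (B : Set (Ω i)) (hB : MeasurableSet B),
    (P ⟨(fun ω => ω i) ⁻¹' B, (measurable_pi_apply i) hB⟩ : ℝ) = (μ i B).toReal}

end FATransport

namespace FATransport

open Filter Topology

section helpers

variable {α : Type*} [MeasurableSpace α]

lemma fap_empty {P : MSet α → unitInterval} (hP : IsFAP P) :
    (P ⟨∅, MeasurableSet.empty⟩ : ℝ) = 0 := by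
  have := hP.2 ⟨∅, MeasurableSet.empty⟩ ⟨∅, MeasurableSet.empty⟩ (by simp)
  simp only [Set.union_empty] at this
  linarith

open scoped Classical in
noncomputable def opT (P : MSet α → unitInterval) (s : Set α) : ℝ →L[ℝ] ℝ :=
  if h : MeasurableSet s then (P ⟨s, h⟩ : ℝ) • ContinuousLinearMap.id ℝ ℝ else 0

lemma opT_apply (P : MSet α → unitInterval) {s : Set α} (h : MeasurableSet s) (x : ℝ) :
    opT P s x = x * (P ⟨s, h⟩ : ℝ) := by
  simp [opT, h, mul_comm]

lemma simpleInt_eq (P : MSet α → unitInterval) (s : SimpleFunc α ℝ) :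
    simpleInt P s = SimpleFunc.setToSimpleFunc (opT P) s := by
  unfold simpleInt SimpleFunc.setToSimpleFunc
  refine Finset.sum_congr rfl fun y _ => ?_
  rw [opT_apply P (s.measurableSet_fiber y)]

lemma opT_add {P : MSet α → unitInterval} (hP : IsFAP P) :
    FinMeasAdditive (0 : Measure α) (opT P) := by
  intro s t hs ht _ _ hd
  ext
  rw [add_apply, opT_apply P hs, opT_apply P ht, opT_apply P (hs.union ht)]
  have := hP.2 ⟨s, hs⟩ ⟨t, ht⟩ hd
  simp only at this
  rw [this]; ring

lemma simpleInt_add {P : MSet α → unitInterval} (hP : IsFAP P) (s t : SimpleFunc α ℝ) :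
    simpleInt P (s + t) = simpleInt P s + simpleInt P t := by
  simp only [simpleInt_eq]
  exact SimpleFunc.setToSimpleFunc_add _ (opT_add hP) (by simp) (by simp)

lemma simpleInt_const {P : MSet α → unitInterval} (hP : IsFAP P) (x : ℝ) :
    simpleInt P (SimpleFunc.const α x) = x := by
  rw [simpleInt_eq, SimpleFunc.setToSimpleFunc_const, opT_apply P MeasurableSet.univ, hP.1, mul_one]
  ext
  rw [opT_apply P MeasurableSet.empty, fap_empty hP]; simp

lemma simpleInt_mono {P : MSet α → unitInterval} (hP : IsFAP P) {s t : SimpleFunc α ℝ}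
    (h : s ≤ t) : simpleInt P s ≤ simpleInt P t := by
  simp only [simpleInt_eq]
  refine SimpleFunc.setToSimpleFunc_mono (opT_add hP) ?_ (by simp) (by simp) h
  intro s hs _ x hx
  rw [opT_apply P hs]
  exact mul_nonneg hx (P _).2.1

lemma sf_sum_apply {ι : Type*} (S : Finset ι) (g : ι → SimpleFunc α ℝ) (x : α) :
    (∑ i ∈ S, g i) x = ∑ i ∈ S, g i x := by
  classical
  induction S using Finset.induction_on with
  | empty => simp
  | insert a S ha ih => rw [Finset.sum_insert ha, Finset.sum_insert ha, SimpleFunc.add_apply, ih]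

lemma simpleInt_sum {P : MSet α → unitInterval} (hP : IsFAP P) {ι : Type*} (S : Finset ι)
    (g : ι → SimpleFunc α ℝ) :
    simpleInt P (∑ i ∈ S, g i) = ∑ i ∈ S, simpleInt P (g i) := by
  classical
  induction S using Finset.induction_on with
  | empty => exact simpleInt_const hP 0
  | insert a S ha ih => rw [Finset.sum_insert ha, Finset.sum_insert ha, simpleInt_add hP, ih]

lemma le_fapInt {P : MSet α → unitInterval} (hP : IsFAP P) {f : α → ℝ} {K : ℝ}
    (hK : ∀ x, f x ≤ K) {s : SimpleFunc α ℝ} (hs : ∀ x, s x ≤ f x) :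
    simpleInt P s ≤ fapInt P f := by
  refine le_csSup ⟨K, ?_⟩ ⟨s, hs, rfl⟩
  rintro _ ⟨t, ht, rfl⟩
  rw [← simpleInt_const hP K]
  exact simpleInt_mono hP fun x => (ht x).trans (hK x)

open scoped Classical in
noncomputable def truncF (f : α → ℝ) (k : ℕ) (L : ℝ) (x : α) : ℝ :=
  if |f x| ≤ k then (⌊((k : ℝ) + 1) * f x⌋ : ℝ) / ((k : ℝ) + 1) else -L

lemma truncF_meas {f : α → ℝ} (hf : Measurable f) (k : ℕ) (L : ℝ) : Measurable (truncF f k L) := by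
  unfold truncF
  refine Measurable.ite (measurableSet_le hf.abs measurable_const) ?_ measurable_const
  refine Measurable.div_const ?_ _
  exact (measurable_from_top (f := fun z : ℤ => (z : ℝ))).comp
    (Int.measurable_floor.comp (hf.const_mul _))

lemma truncF_fin (f : α → ℝ) (k : ℕ) (L : ℝ) : (Set.range (truncF f k L)).Finite := by
  have h1 : ((fun z : ℤ => (z : ℝ) / ((k : ℝ) + 1)) ''
    (Set.Icc (-(((k : ℤ) + 1) * k)) (((k : ℤ) + 1) * k))).Finite :=
      (Set.finite_Icc _ _).image _
  refine (h1.union (Set.finite_singleton (-L))).subset ?_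
  rintro _ ⟨x, rfl⟩
  unfold truncF
  split_ifs with h
  · left
    refine ⟨_, ⟨?_, ?_⟩, rfl⟩
    · rw [Int.le_floor]
      push_cast
      nlinarith [(abs_le.1 h).1, (Nat.cast_nonneg k : (0:ℝ) ≤ k)]
    · have : (⌊((k : ℝ) + 1) * f x⌋ : ℝ) ≤ (((k : ℤ) + 1) * k : ℤ) := by
        refine (Int.floor_le _).trans ?_
        push_cast
        nlinarith [(abs_le.1 h).2, (Nat.cast_nonneg k : (0:ℝ) ≤ k)]
      exact_mod_cast this
  · right; rfl

noncomputable def truncS {f : α → ℝ} (hf : Measurable f) (k : ℕ) (L : ℝ) : SimpleFunc α ℝ :=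
  ⟨truncF f k L, fun _ => truncF_meas hf k L (measurableSet_singleton _), truncF_fin f k L⟩

lemma truncF_le {f : α → ℝ} {k : ℕ} {L : ℝ} {x : α} (h : |f x| ≤ k) : truncF f k L x ≤ f x := by
  have hk : (0 : ℝ) < (k : ℝ) + 1 := by positivity
  rw [truncF, if_pos h, div_le_iff₀ hk, mul_comm]
  exact Int.floor_le _

lemma truncF_ge {f : α → ℝ} {k : ℕ} {L : ℝ} {x : α} (h : |f x| ≤ k) :
    f x - 1 / ((k : ℝ) + 1) ≤ truncF f k L x := by
  have hk : (0 : ℝ) < (k : ℝ) + 1 := by positivity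
  rw [truncF, if_pos h, le_div_iff₀ hk, sub_mul, one_div, inv_mul_cancel₀ hk.ne', mul_comm]
  exact (Int.sub_one_lt_floor _).le

lemma truncF_neg {f : α → ℝ} {k : ℕ} {L : ℝ} {x : α} (h : ¬ |f x| ≤ k) : truncF f k L x = -L := by
  rw [truncF, if_neg h]

lemma trunc_tendsto {μ : Measure α} [IsProbabilityMeasure μ] {f : α → ℝ} (hf : Measurable f)
    (hi : Integrable f μ) (n : ℕ) :
    Tendsto (fun k : ℕ => ∫ x, truncF f k ((n : ℝ) * k) x ∂μ) atTop (𝓝 (∫ x, f x ∂μ)) := by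
  refine tendsto_integral_of_dominated_convergence (fun x => ((n : ℝ) + 1) * |f x| + 1)
    (fun k => (truncF_meas hf _ _).aestronglyMeasurable)
    ((hi.abs.const_mul _).add (integrable_const _)) ?_ ?_
  · intro k
    refine Eventually.of_forall fun x => ?_
    have hn : (0 : ℝ) ≤ n := Nat.cast_nonneg n
    have h0 := abs_nonneg (f x)
    rw [Real.norm_eq_abs]
    by_cases h : |f x| ≤ k
    · have h1 := truncF_le (L := (n : ℝ) * k) h
      have h2 := truncF_ge (L := (n : ℝ) * k) h
      have h3 : 1 / ((k : ℝ) + 1) ≤ 1 := by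
        rw [div_le_one (by positivity)]; linarith [(Nat.cast_nonneg k : (0:ℝ) ≤ k)]
      have := mul_nonneg hn h0
      rw [abs_le]
      constructor <;> nlinarith [neg_abs_le (f x), le_abs_self (f x)]
    · rw [truncF_neg h, abs_neg, abs_of_nonneg (by positivity)]
      push Not at h
      nlinarith [mul_le_mul_of_nonneg_left h.le hn]
  · refine Eventually.of_forall fun x => ?_
    have hev : ∀ᶠ k : ℕ in atTop, |f x| ≤ k := by
      obtain ⟨m, hm⟩ := exists_nat_ge |f x|
      filter_upwards [eventually_ge_atTop m] with k hk
      exact hm.trans (by exact_mod_cast hk)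
    refine tendsto_of_tendsto_of_tendsto_of_le_of_le'
      (g := fun k : ℕ => f x - 1 / ((k : ℝ) + 1)) (h := fun _ => f x) ?_ tendsto_const_nhds ?_ ?_
    · simpa using tendsto_const_nhds.sub (tendsto_one_div_add_atTop_nhds_zero_nat (𝕜 := ℝ))
    · filter_upwards [hev] with k hk using truncF_ge hk
    · filter_upwards [hev] with k hk using truncF_le hk

end helpers

section weak

variable {n : ℕ} {Ω : Fin n → Type*} [∀ i, MeasurableSpace (Ω i)]

lemma simpleInt_comp {μ : ∀ i, Measure (Ω i)} [∀ i, IsProbabilityMeasure (μ i)]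
    {Q : MSet (∀ i, Ω i) → unitInterval} (hQ : Q ∈ couplings μ) (i : Fin n)
    (u : SimpleFunc (Ω i) ℝ) :
    simpleInt Q (u.comp (fun ω => ω i) (measurable_pi_apply i)) = ∫ x, u x ∂(μ i) := by
  rw [SimpleFunc.integral_eq_sum _ (SimpleFunc.integrable_of_isFiniteMeasure u), simpleInt]
  rw [← Finset.sum_subset (SimpleFunc.range_comp_subset_range u (measurable_pi_apply i))]
  · refine Finset.sum_congr rfl fun y _ => ?_
    have := hQ.2 i (u ⁻¹' {y}) (u.measurableSet_fiber y)
    rw [smul_eq_mul, mul_comm, Measure.real, ← this]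
    rfl
  · intro y _ hy
    have := hQ.2 i (u ⁻¹' {y}) (u.measurableSet_fiber y)
    rw [Measure.real, ← this]
    have he : (fun ω : ∀ i, Ω i => ω i) ⁻¹' (u ⁻¹' {y}) = ∅ := by
      rw [Set.eq_empty_iff_forall_notMem]
      intro ω hω
      apply hy
      rw [SimpleFunc.mem_range]
      exact ⟨ω, hω⟩
    have h2 := fap_empty hQ.1
    simp only [he, h2, zero_smul]

lemma weak_duality {μ : ∀ i, Measure (Ω i)} [∀ i, IsProbabilityMeasure (μ i)]
    {c : (∀ i, Ω i) → ℝ≥0∞}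
    {Q : MSet (∀ i, Ω i) → unitInterval} (hQ : Q ∈ couplings μ)
    {f : ∀ i, Ω i → ℝ} (hf : ∀ i, Measurable (f i) ∧ Integrable (f i) (μ i))
    (hfc : ∀ ω : ∀ i, Ω i, (∑ i, f i (ω i)) ≤ (c ω).toReal ∨ c ω = ⊤) :
    ENNReal.ofReal (∑ i, ∫ x, f i x ∂(μ i)) ≤ fapIntTop Q c := by
  have hlim : Tendsto (fun k : ℕ => ENNReal.ofReal
      (∑ i, ∫ x, truncF (f i) k ((n : ℝ) * k) x ∂(μ i))) atTop
      (𝓝 (ENNReal.ofReal (∑ i, ∫ x, f i x ∂(μ i)))) :=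
    ENNReal.tendsto_ofReal (tendsto_finsetSum _ fun i _ => trunc_tendsto (hf i).1 (hf i).2 n)
  refine le_of_tendsto' hlim fun k => ?_
  refine le_trans ?_ (le_iSup _ (n * k))
  refine ENNReal.ofReal_le_ofReal ?_
  let u : ∀ i, SimpleFunc (Ω i) ℝ := fun i => truncS (hf i).1 k ((n : ℝ) * k)
  have hu : ∑ i, ∫ x, truncF (f i) k ((n : ℝ) * k) x ∂(μ i) =
      simpleInt Q (∑ i, (u i).comp (fun ω => ω i) (measurable_pi_apply i)) := by
    rw [simpleInt_sum hQ.1]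
    refine Finset.sum_congr rfl fun i _ => ?_
    rw [simpleInt_comp hQ]
    rfl
  rw [hu]
  refine le_fapInt hQ.1 (K := ((n * k : ℕ) : ℝ)) ?_ ?_
  · intro ω
    refine (ENNReal.toReal_mono (ENNReal.natCast_ne_top _) inf_le_right).trans (by simp)
  · intro ω
    rw [sf_sum_apply]
    change ∑ i, truncF (f i) k ((n : ℝ) * k) (ω i) ≤ _
    have hn : (0 : ℝ) ≤ n := Nat.cast_nonneg n
    have hk : (0 : ℝ) ≤ k := Nat.cast_nonneg k
    have hle : ∀ i, truncF (f i) k ((n : ℝ) * k) (ω i) ≤ k := by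
      intro i
      by_cases h : |f i (ω i)| ≤ k
      · exact (truncF_le h).trans ((le_abs_self _).trans h)
      · rw [truncF_neg h]; nlinarith [mul_nonneg hn hk]
    by_cases hall : ∀ i, |f i (ω i)| ≤ k
    · have h1 : ∑ i, truncF (f i) k ((n : ℝ) * k) (ω i) ≤ ∑ i, f i (ω i) :=
        Finset.sum_le_sum fun i _ => truncF_le (hall i)
      have h2 : ∑ i, truncF (f i) k ((n : ℝ) * k) (ω i) ≤ (n : ℝ) * k := by
        refine (Finset.sum_le_sum fun i _ => hle i).trans ?_
        simp
      rcases le_total (c ω) ((n * k : ℕ) : ℝ≥0∞) with h | h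
      · rw [inf_eq_left.2 h]
        rcases hfc ω with h' | h'
        · exact h1.trans h'
        · rw [h'] at h; exact absurd (top_le_iff.1 h) (ENNReal.natCast_ne_top _)
      · rw [inf_eq_right.2 h]
        refine h2.trans (by simp)
    · push Not at hall
      obtain ⟨j, hj⟩ := hall
      refine le_trans ?_ ENNReal.toReal_nonneg
      calc ∑ i, truncF (f i) k ((n : ℝ) * k) (ω i)
          ≤ ∑ i, ((k : ℝ) + if i = j then -((n : ℝ) * k) else 0) := by
            refine Finset.sum_le_sum fun i _ => ?_
            split_ifs with h
            · subst h
              rw [truncF_neg (not_le.2 hj)]; linarith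
            · simpa using hle i
        _ ≤ 0 := by
            rw [Finset.sum_add_distrib, Finset.sum_ite_eq']
            simp

end weak

section strong

variable {n : ℕ} {Ω : Fin n → Type*} [∀ i, MeasurableSpace (Ω i)]

/-- Values of the sublinear functional's defining problem. -/
def DT (μ : ∀ i, Measure (Ω i)) (c : (∀ i, Ω i) → ℝ≥0∞) (D : ℝ)
    (g : SimpleFunc (∀ i, Ω i) ℝ) : Set ℝ :=
  {t | ∃ (f : ∀ i, Ω i → ℝ) (s : ℝ), 0 < s ∧
    (∀ i, Measurable (f i) ∧ Integrable (f i) (μ i)) ∧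
    (∀ ω : ∀ i, Ω i, g ω ≤ ∑ i, f i (ω i) + s * (c ω).toReal ∨ c ω = ⊤) ∧
    t = ∑ i, ∫ x, f i x ∂(μ i) + s * D}

lemma DT_lower {μ : ∀ i, Measure (Ω i)} [∀ i, IsProbabilityMeasure (μ i)]
    {c : (∀ i, Ω i) → ℝ≥0∞} {D : ℝ}
    (hD : ∀ f : ∀ i, Ω i → ℝ, (∀ i, Measurable (f i) ∧ Integrable (f i) (μ i)) →
      (∀ ω : ∀ i, Ω i, (∑ i, f i (ω i)) ≤ (c ω).toReal ∨ c ω = ⊤) →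
      ∑ i, ∫ x, f i x ∂(μ i) ≤ D)
    {g : SimpleFunc (∀ i, Ω i) ℝ} {C : ℝ} (hg : ∀ ω, -(n * C) ≤ g ω) {t : ℝ}
    (ht : t ∈ DT μ c D g) : -(n * C) ≤ t := by
  obtain ⟨f, s, hs, hf, hfc, rfl⟩ := ht
  have key := hD (fun i x => s⁻¹ * (-f i x - C))
    (fun i => ⟨((hf i).1.neg.sub_const _).const_mul _,
      ((hf i).2.neg.sub (integrable_const _)).const_mul _⟩) ?_
  · have : ∑ i, ∫ x, s⁻¹ * (-f i x - C) ∂(μ i) =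
        s⁻¹ * (-(∑ i, ∫ x, f i x ∂(μ i)) - n * C) := by
      have h1 : ∀ i, ∫ x, s⁻¹ * (-f i x - C) ∂(μ i) = s⁻¹ * (-(∫ x, f i x ∂(μ i)) - C) := by
        intro i
        rw [integral_const_mul, integral_sub (hf i).2.fun_neg (integrable_const _), integral_neg]
        simp
      simp_rw [h1]
      rw [← Finset.mul_sum, Finset.sum_sub_distrib, Finset.sum_neg_distrib]
      simp
    rw [this, inv_mul_le_iff₀ hs] at key
    linarith
  · intro ω
    rcases hfc ω with h | h
    · left
      rw [← Finset.mul_sum, Finset.sum_sub_distrib, Finset.sum_neg_distrib, inv_mul_le_iff₀ hs]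
      have := hg ω
      simp
      linarith
    · right; exact h

lemma sf_bound {α : Type*} [MeasurableSpace α] (g : SimpleFunc α ℝ) :
    ∃ C : ℝ, 0 ≤ C ∧ ∀ x, |g x| ≤ C := by
  obtain ⟨C, hC⟩ := (g.finite_range.image abs).bddAbove
  refine ⟨max C 0, le_max_right _ _, fun x => le_trans (hC ⟨_, ⟨x, rfl⟩, rfl⟩) (le_max_left _ _)⟩

lemma exists_functional (hn : 0 < n) {μ : ∀ i, Measure (Ω i)} [∀ i, IsProbabilityMeasure (μ i)]
    {c : (∀ i, Ω i) → ℝ≥0∞} {D : ℝ}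
    (hD : ∀ f : ∀ i, Ω i → ℝ, (∀ i, Measurable (f i) ∧ Integrable (f i) (μ i)) →
      (∀ ω : ∀ i, Ω i, (∑ i, f i (ω i)) ≤ (c ω).toReal ∨ c ω = ⊤) →
      ∑ i, ∫ x, f i x ∂(μ i) ≤ D) :
    ∃ φ : SimpleFunc (∀ i, Ω i) ℝ →ₗ[ℝ] ℝ, ∀ g, ∀ t ∈ DT μ c D g, φ g ≤ t := by
  have hn1 : (1 : ℝ) ≤ n := by exact_mod_cast hn
  have hbdd : ∀ g, BddBelow (DT μ c D g) := by
    intro g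
    obtain ⟨C, hC0, hC⟩ := sf_bound g
    refine ⟨-(n * C), fun t ht => DT_lower hD (fun ω => ?_) ht⟩
    nlinarith [neg_abs_le (g ω), hC ω]
  have hne : ∀ g, (DT μ c D g).Nonempty := by
    intro g
    obtain ⟨C, hC0, hC⟩ := sf_bound g
    refine ⟨_, fun _ _ => C, 1, one_pos, fun i => ⟨measurable_const, integrable_const _⟩,
      fun ω => Or.inl ?_, rfl⟩
    have := (c ω).toReal_nonneg
    simp
    nlinarith [le_abs_self (g ω), hC ω]
  have hhom1 : ∀ a : ℝ, 0 < a → ∀ g, ∀ t ∈ DT μ c D g, a * t ∈ DT μ c D (a • g) := by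
    rintro a ha g _ ⟨f, s, hs, hf, hfc, rfl⟩
    refine ⟨fun i x => a * f i x, a * s, mul_pos ha hs,
      fun i => ⟨(hf i).1.const_mul _, (hf i).2.const_mul _⟩, fun ω => ?_, ?_⟩
    · refine (hfc ω).imp_left fun h => ?_
      rw [SimpleFunc.smul_apply, smul_eq_mul, ← Finset.mul_sum, mul_assoc, ← mul_add]
      exact mul_le_mul_of_nonneg_left h ha.le
    · simp_rw [integral_const_mul]
      rw [← Finset.mul_sum]; ring
  have hhom2 : ∀ a : ℝ, 0 < a → ∀ g, sInf (DT μ c D (a • g)) ≤ a * sInf (DT μ c D g) := by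
    intro a ha g
    rw [← inv_mul_le_iff₀ ha]
    refine le_csInf (hne g) fun t ht => ?_
    rw [inv_mul_le_iff₀ ha]
    exact csInf_le (hbdd _) (hhom1 a ha g t ht)
  have hex := exists_extension_of_le_sublinear
    (⊥ : SimpleFunc (∀ i, Ω i) ℝ →ₗ.[ℝ] ℝ) (fun g => sInf (DT μ c D g)) ?_ ?_ ?_
  · obtain ⟨φ, _, hφ⟩ := hex
    exact ⟨φ, fun g t ht => (hφ g).trans (csInf_le (hbdd g) ht)⟩
  · intro a ha g
    refine le_antisymm (hhom2 a ha g) ?_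
    have := hhom2 a⁻¹ (inv_pos.2 ha) (a • g)
    rw [inv_smul_smul₀ ha.ne', le_inv_mul_iff₀ ha] at this
    exact this
  · intro g h
    rw [← sub_le_iff_le_add]
    refine le_csInf (hne g) ?_
    rintro _ ⟨f, s, hs, hf, hfc, rfl⟩
    rw [sub_le_comm]
    refine le_csInf (hne h) ?_
    rintro _ ⟨f', s', hs', hf', hfc', rfl⟩
    rw [sub_le_iff_le_add]
    refine csInf_le (hbdd _) ⟨fun i x => f i x + f' i x, s + s', add_pos hs hs',
      fun i => ⟨(hf i).1.add (hf' i).1, (hf i).2.add (hf' i).2⟩, fun ω => ?_, ?_⟩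
    · rcases hfc ω with h1 | h1
      · rcases hfc' ω with h2 | h2
        · left
          rw [Finset.sum_add_distrib, SimpleFunc.add_apply]
          linarith
        · exact Or.inr h2
      · exact Or.inr h1
    · have : ∀ i, ∫ x, (f i x + f' i x) ∂(μ i) = ∫ x, f i x ∂(μ i) + ∫ x, f' i x ∂(μ i) :=
        fun i => integral_add (hf i).2 (hf' i).2
      simp_rw [this]
      rw [Finset.sum_add_distrib]; ring
  · rintro ⟨g, hg⟩
    have hg0 : g = 0 := (Submodule.mem_bot ℝ).1 hg
    subst hg0
    have : (⊥ : SimpleFunc (∀ i, Ω i) ℝ →ₗ.[ℝ] ℝ) ⟨0, hg⟩ = 0 := LinearPMap.map_zero _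
    rw [this]
    refine le_csInf (hne 0) fun t ht => ?_
    have := DT_lower hD (C := 0) (g := 0) (fun ω => by simp) ht
    simpa using this

/-- Indicator as a simple function. -/
noncomputable def sind {α : Type*} [MeasurableSpace α] (A : MSet α) : SimpleFunc α ℝ :=
  open scoped Classical in
  SimpleFunc.piecewise A.1 A.2 (SimpleFunc.const α 1) (SimpleFunc.const α 0)

lemma sind_apply {α : Type*} [MeasurableSpace α] (A : MSet α) (x : α) :
    sind A x = A.1.indicator 1 x := by
  classical
  simp only [sind, SimpleFunc.piecewise_apply, Set.indicator_apply, SimpleFunc.const_apply]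
  rfl

lemma strong_duality (hn : 0 < n) {μ : ∀ i, Measure (Ω i)} [∀ i, IsProbabilityMeasure (μ i)]
    {c : (∀ i, Ω i) → ℝ≥0∞} {D : ℝ}
    (hD : ∀ f : ∀ i, Ω i → ℝ, (∀ i, Measurable (f i) ∧ Integrable (f i) (μ i)) →
      (∀ ω : ∀ i, Ω i, (∑ i, f i (ω i)) ≤ (c ω).toReal ∨ c ω = ⊤) →
      ∑ i, ∫ x, f i x ∂(μ i) ≤ D) :
    ∃ Q ∈ couplings μ, fapIntTop Q c ≤ ENNReal.ofReal D := by
  have hD0 : 0 ≤ D := by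
    have := hD (fun _ _ => 0) (fun i => ⟨measurable_const, integrable_const _⟩)
      (fun ω => Or.inl (by simp))
    simpa using this
  obtain ⟨φ, hφ⟩ := exists_functional hn hD
  have ha : ∀ (g : SimpleFunc (∀ i, Ω i) ℝ) (f : ∀ i, Ω i → ℝ),
      (∀ i, Measurable (f i) ∧ Integrable (f i) (μ i)) → (∀ ω, g ω ≤ ∑ i, f i (ω i)) →
      φ g ≤ ∑ i, ∫ x, f i x ∂(μ i) := by
    intro g f hf hg
    refine le_of_forall_pos_le_add fun ε hε => ?_
    have hs : 0 < ε / (D + 1) := by positivity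
    refine (hφ g _ ⟨f, ε / (D + 1), hs, hf, fun ω => Or.inl ?_, rfl⟩).trans ?_
    · have := mul_nonneg hs.le (c ω).toReal_nonneg
      linarith [hg ω]
    · have : ε / (D + 1) * D ≤ ε := by
        rw [div_mul_eq_mul_div, div_le_iff₀ (by positivity)]
        nlinarith
      linarith
  have hb : ∀ (g : SimpleFunc (∀ i, Ω i) ℝ) (i : Fin n) (u : Ω i → ℝ),
      Measurable u → Integrable u (μ i) → (∀ ω, g ω ≤ u (ω i)) → φ g ≤ ∫ x, u x ∂(μ i) := by
    intro g i u hu hui hg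
    have := ha g (Pi.single i u) ?_ ?_
    · rw [Finset.sum_eq_single i] at this
      · simpa using this
      · intro j _ hj
        simp [Pi.single_eq_of_ne hj]
      · simp
    · intro j
      by_cases hj : j = i
      · subst hj; simpa using ⟨hu, hui⟩
      · rw [Pi.single_eq_of_ne hj]
        exact ⟨measurable_const, integrable_const _⟩
    · intro ω
      rw [Finset.sum_eq_single i]
      · simpa using hg ω
      · intro j _ hj
        simp [Pi.single_eq_of_ne hj]
      · simp
  let i0 : Fin n := ⟨0, hn⟩
  have hpos : ∀ g : SimpleFunc (∀ i, Ω i) ℝ, (∀ ω, 0 ≤ g ω) → 0 ≤ φ g := by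
    intro g hg
    have := hb (-g) i0 (fun _ => 0) measurable_const (integrable_const _)
      (fun ω => by simpa using hg ω)
    rw [map_neg] at this
    simpa using this
  have hle1 : ∀ A : MSet (∀ i, Ω i), φ (sind A) ≤ 1 := by
    intro A
    have := hb (sind A) i0 (fun _ => 1) measurable_const (integrable_const _)
      (fun ω => by rw [sind_apply]; exact Set.indicator_le_self' (by simp) _)
    simpa using this
  have h0 : ∀ A : MSet (∀ i, Ω i), 0 ≤ φ (sind A) := fun A =>
    hpos _ fun ω => by rw [sind_apply]; exact Set.indicator_nonneg (by simp) _
  let Q : MSet (∀ i, Ω i) → unitInterval := fun A => ⟨φ (sind A), h0 A, hle1 A⟩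
  have hmarg : ∀ (i : Fin n) (B : Set (Ω i)) (hB : MeasurableSet B),
      φ (sind ⟨(fun ω => ω i) ⁻¹' B, (measurable_pi_apply i) hB⟩) = (μ i B).toReal := by
    intro i B hB
    have hint : Integrable (B.indicator (1 : Ω i → ℝ)) (μ i) := (integrable_const 1).indicator hB
    have hme : Measurable (B.indicator (1 : Ω i → ℝ)) := measurable_one.indicator hB
    have hval : ∫ x, B.indicator (1 : Ω i → ℝ) x ∂(μ i) = (μ i B).toReal := by
      rw [integral_indicator_one hB]; rfl
    refine le_antisymm ?_ ?_
    · rw [← hval]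
      refine hb _ i _ hme hint fun ω => ?_
      rw [sind_apply]; exact le_of_eq rfl
    · have := hb (-sind ⟨(fun ω => ω i) ⁻¹' B, (measurable_pi_apply i) hB⟩) i
        (fun x => -B.indicator (1 : Ω i → ℝ) x) hme.neg hint.neg fun ω => by
          rw [SimpleFunc.neg_apply, sind_apply]; exact le_of_eq rfl
      rw [map_neg, integral_neg, hval] at this
      linarith
  have hsimple : ∀ s, simpleInt Q s = φ s := by
    intro s
    have : s = ∑ y ∈ s.range, y • sind ⟨(⇑s) ⁻¹' {y}, s.measurableSet_fiber y⟩ := by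
      ext ω
      rw [sf_sum_apply, Finset.sum_eq_single (s ω)]
      · rw [SimpleFunc.smul_apply, sind_apply]; simp
      · intro y _ hy
        rw [SimpleFunc.smul_apply, sind_apply]
        simp [hy.symm]
      · intro h; exact absurd (SimpleFunc.mem_range_self s ω) h
    conv_rhs => rw [this]
    rw [map_sum]
    refine Finset.sum_congr rfl fun y _ => ?_
    rw [map_smul, smul_eq_mul]
  refine ⟨Q, ⟨⟨?_, ?_⟩, hmarg⟩, ?_⟩
  · have := hmarg i0 Set.univ MeasurableSet.univ
    change φ _ = 1
    simpa using this
  · intro A B hAB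
    change φ _ = φ _ + φ _
    rw [← map_add]
    congr 1
    ext ω
    rw [SimpleFunc.add_apply, sind_apply, sind_apply, sind_apply,
      Set.indicator_union_of_disjoint hAB]
  · refine iSup_le fun k => ENNReal.ofReal_le_ofReal ?_
    refine Real.sSup_le ?_ hD0
    rintro _ ⟨s, hs, rfl⟩
    rw [hsimple]
    refine (hφ s _ ⟨fun _ _ => 0, 1, one_pos, fun i => ⟨measurable_const, integrable_const _⟩,
      fun ω => ?_, rfl⟩).trans (by simp)
    by_cases h : c ω = ⊤
    · exact Or.inr h
    · left
      have := (hs ω).trans (ENNReal.toReal_mono h inf_le_left)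
      simpa using this

end strong

/-- duality over finitely additive couplings:
`inf_{Q ∈ M} Q(c) = sup { Σᵢ μᵢ(fᵢ) : fᵢ ∈ L¹(μᵢ), ⊕ᵢ fᵢ ≤ c }`.
The pointwise constraint `Σᵢ fᵢ(ωᵢ) ≤ c(ω)` (with `c` `[0,∞]`-valued) is expressed
as `Σᵢ fᵢ(ωᵢ) ≤ (c ω).toReal ∨ c ω = ∞`, which is equivalent; since the zero tuple
is admissible the supremum is `≥ 0`, so taking it in `[0,∞]` via `ENNReal.ofReal`
is also equivalent. -/
theorem duality_couplings
    {n : ℕ} (hn : 0 < n) {Ω : Fin n → Type*} [∀ i, MeasurableSpace (Ω i)]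
    (μ : ∀ i, Measure (Ω i)) [∀ i, IsProbabilityMeasure (μ i)]
    (c : (∀ i, Ω i) → ℝ≥0∞) (hc : Measurable c) :
    (⨅ Q ∈ couplings μ, fapIntTop Q c) =
      ⨆ (f : ∀ i, Ω i → ℝ)
        (_ : (∀ i, Measurable (f i) ∧ Integrable (f i) (μ i)) ∧
          ∀ ω : ∀ i, Ω i, (∑ i, f i (ω i)) ≤ (c ω).toReal ∨ c ω = ⊤),
        ENNReal.ofReal (∑ i, ∫ x, f i x ∂(μ i)) := by
  refine le_antisymm ?_ ?_
  · by_cases htop : (⨆ (f : ∀ i, Ω i → ℝ)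
        (_ : (∀ i, Measurable (f i) ∧ Integrable (f i) (μ i)) ∧
          ∀ ω : ∀ i, Ω i, (∑ i, f i (ω i)) ≤ (c ω).toReal ∨ c ω = ⊤),
        ENNReal.ofReal (∑ i, ∫ x, f i x ∂(μ i))) = ⊤
    · rw [htop]; exact le_top
    · rw [← ENNReal.ofReal_toReal htop]
      obtain ⟨Q, hQ, hQc⟩ := strong_duality hn (μ := μ) (c := c) (D := ENNReal.toReal _)
        (fun f hf hfc => (ENNReal.ofReal_le_iff_le_toReal htop).1
          (le_iSup₂_of_le f ⟨hf, hfc⟩ le_rfl))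
      exact (iInf₂_le Q hQ).trans hQc
  · exact iSup₂_le fun f hf => le_iInf₂ fun Q hQ => weak_duality hQ hf.1 hf.2

end FATransport
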